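/- arXiv:2104.05616 — 6 statements merged into one kernel-verified Lean document; each statement's English description precedes it below -/
import Mathlib

section
/- Let V be a commutative quantale and (X,a) a V-group, and let N_X = {x ∈ X | k ≤ a(0,x) and k ≤ a(x,0)}. If x₁, x₂, x₁′, x₂′ ∈ X satisfy x₁ + (−x₁′) ∈ N_X and x₂ + (−x₂′) ∈ N_X, then a(x₁,x₂) = a(x₁′,x₂′). -/
/-!
Say `x ≤ y` when the unit of `V` lies below `a x y`. Transitivity makes `a` decreasing in its first
variable and increasing in its second for this relation, so `a` does not distinguish points that lie
below each other. Shifting `0` and `x - y` by `y` shows that `x - y ∈ N_X` says exactly that `x` and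
`y` are such points.
-/

/-- The relation underlying a `V`-valued structure `a` on `X`: `x` lies below `y` when the unit of
`V` lies below `a x y`. In these terms `N_X` is the set of all `x` such that
`AntisymmRel (UnderlyingLE a) 0 x`. -/
def UnderlyingLE {V X : Type*} [One V] [LE V] (a : X → X → V) (x y : X) : Prop :=
  1 ≤ a x y

namespace UnderlyingLE

section Transitive

variable {V X : Type*} [MulOneClass V] {a : X → X → V}

theorem apply_le_apply_right [Preorder V] [MulLeftMono V]
    (ha_trans : ∀ x y z : X, a x y * a y z ≤ a x z) {y z : X} (h : UnderlyingLE a y z) (x : X) :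
    a x y ≤ a x z :=
  (le_mul_of_one_le_right' h).trans (ha_trans x y z)

theorem apply_le_apply_left [Preorder V] [MulRightMono V]
    (ha_trans : ∀ x y z : X, a x y * a y z ≤ a x z) {x y : X} (h : UnderlyingLE a x y) (z : X) :
    a y z ≤ a x z :=
  (le_mul_of_one_le_left' h).trans (ha_trans x y z)

theorem apply_le_apply [Preorder V] [MulLeftMono V] [MulRightMono V]
    (ha_trans : ∀ x y z : X, a x y * a y z ≤ a x z) {x x' y y' : X}
    (hx : UnderlyingLE a x' x) (hy : UnderlyingLE a y y') : a x y ≤ a x' y' :=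
  (hy.apply_le_apply_right ha_trans x).trans (hx.apply_le_apply_left ha_trans y')

theorem apply_eq_apply_of_antisymmRel [PartialOrder V] [MulLeftMono V] [MulRightMono V]
    (ha_trans : ∀ x y z : X, a x y * a y z ≤ a x z) {x x' y y' : X}
    (hx : AntisymmRel (UnderlyingLE a) x x') (hy : AntisymmRel (UnderlyingLE a) y y') :
    a x y = a x' y' :=
  le_antisymm (apply_le_apply ha_trans hx.2 hy.1) (apply_le_apply ha_trans hx.1 hy.2)

end Transitive

section ShiftInvariant

variable {V X : Type*} [One V] [LE V] {a : X → X → V}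

theorem add_right_iff [Add X] (ha_shift : ∀ z x y : X, a x y = a (x + z) (y + z)) (z x y : X) :
    UnderlyingLE a (x + z) (y + z) ↔ UnderlyingLE a x y := by
  rw [UnderlyingLE, UnderlyingLE, ← ha_shift]

theorem antisymmRel_zero_add_neg_iff [AddGroup X]
    (ha_shift : ∀ z x y : X, a x y = a (x + z) (y + z)) {x y : X} :
    AntisymmRel (UnderlyingLE a) 0 (x + -y) ↔ AntisymmRel (UnderlyingLE a) y x := by
  rw [AntisymmRel, ← add_right_iff ha_shift y 0, ← add_right_iff ha_shift y (x + -y), zero_add,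
    neg_add_cancel_right, AntisymmRel]

end ShiftInvariant

end UnderlyingLE

theorem stmt_4_general {V : Type*} [PartialOrder V] [MulOneClass V] [MulLeftMono V]
    [MulRightMono V] {X : Type*} [AddGroup X] (a : X → X → V)
    (ha_trans : ∀ x x' x'' : X, a x x' * a x' x'' ≤ a x x'')
    (ha_shift : ∀ x x' x'' : X, a x' x'' = a (x' + x) (x'' + x))
    (x₁ x₂ x₁' x₂' : X)
    (h₁ : x₁ + (-x₁') ∈ {x : X | 1 ≤ a 0 x ∧ 1 ≤ a x 0})
    (h₂ : x₂ + (-x₂') ∈ {x : X | 1 ≤ a 0 x ∧ 1 ≤ a x 0}) :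
    a x₁ x₂ = a x₁' x₂' := by
  have h₁' : AntisymmRel (UnderlyingLE a) x₁' x₁ :=
    (UnderlyingLE.antisymmRel_zero_add_neg_iff ha_shift).mp h₁
  have h₂' : AntisymmRel (UnderlyingLE a) x₂' x₂ :=
    (UnderlyingLE.antisymmRel_zero_add_neg_iff ha_shift).mp h₂
  exact UnderlyingLE.apply_eq_apply_of_antisymmRel ha_trans h₁'.symm h₂'.symm

theorem stmt_4 {V : Type*} [CompleteLattice V] [CommMonoid V]
    (hq : ∀ (v : V) (s : Set V), v * sSup s = ⨆ u ∈ s, v * u)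
    {X : Type*} [AddGroup X] (a : X → X → V)
    (ha_refl : ∀ x : X, 1 ≤ a x x)
    (ha_trans : ∀ x x' x'' : X, a x x' * a x' x'' ≤ a x x'')
    (ha_shift : ∀ x x' x'' : X, a x' x'' = a (x' + x) (x'' + x))
    (x₁ x₂ x₁' x₂' : X)
    (h₁ : x₁ + (-x₁') ∈ {x : X | 1 ≤ a 0 x ∧ 1 ≤ a x 0})
    (h₂ : x₂ + (-x₂') ∈ {x : X | 1 ≤ a 0 x ∧ 1 ≤ a x 0}) :
    a x₁ x₂ = a x₁' x₂' := by
  have : IsQuantale V := ⟨hq, fun s v => by simpa only [mul_comm _ v] using hq v s⟩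
  exact stmt_4_general a ha_trans ha_shift x₁ x₂ x₁' x₂' h₁ h₂
end

section
/- Let V be a commutative quantale, (X,a) a V-group, and N a normal subgroup of X. Define c on the quotient group X/N by c(w₁,w₂) = ⨆{a(x₁,x₂) | [x₁] = w₁ and [x₂] = w₂}. Then (X/N, c) is a V-group (c is reflexive, transitive and invariant by shifting) and the quotient map X → X/N is a V-homomorphism. -/
/-!
To compare `c w₁ w₂ * c w₂ w₃` with `c w₁ w₃`, distribute `*` over both suprema: each term is
`a x₁ x₂ * a x₃ x₄` with `x₂` and `x₃` in the same fibre, so `a`-transitivity does not yet apply.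
Shifting the second factor by `-x₃ + x₂` turns it into `a x₂ (x₄ + (-x₃ + x₂))`; the two factors now
compose, and the endpoint stays over `w₃` because `-x₃ + x₂` lies in the kernel.
-/

section VPushforward

variable {V X Y : Type*} [CompleteLattice V] {a : X → X → V}

/-- The direct image of a `V`-valued relation `a` along a map `f`: its value at `(w₁, w₂)` is the
supremum of `a` over the pairs lying above `(w₁, w₂)`. Along a quotient map this is the quotient
structure. -/
def vPushforward (f : X → Y) (a : X → X → V) (w₁ w₂ : Y) : V :=
  ⨆ x₁ : X, ⨆ x₂ : X, ⨆ _ : f x₁ = w₁ ∧ f x₂ = w₂, a x₁ x₂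

theorem vPushforward_le_iff {f : X → Y} {w₁ w₂ : Y} {v : V} :
    vPushforward f a w₁ w₂ ≤ v ↔ ∀ x₁ x₂, f x₁ = w₁ → f x₂ = w₂ → a x₁ x₂ ≤ v := by
  simp only [vPushforward, iSup_le_iff, and_imp]

theorem le_vPushforward (f : X → Y) (a : X → X → V) (x₁ x₂ : X) :
    a x₁ x₂ ≤ vPushforward f a (f x₁) (f x₂) :=
  vPushforward_le_iff.mp le_rfl x₁ x₂ rfl rfl

theorem vPushforward_mul_vPushforward_le_iff [Semigroup V] [IsQuantale V] {f : X → Y}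
    {w₁ w₂ w₃ w₄ : Y} {v : V} :
    vPushforward f a w₁ w₂ * vPushforward f a w₃ w₄ ≤ v ↔
      ∀ x₁ x₂, f x₁ = w₁ → f x₂ = w₂ → ∀ x₃ x₄, f x₃ = w₃ → f x₄ = w₄ →
        a x₁ x₂ * a x₃ x₄ ≤ v := by
  simp only [← Quantale.leftMulResiduation_le_iff_mul_le, vPushforward_le_iff]
  simp only [Quantale.leftMulResiduation_le_iff_mul_le,
    ← Quantale.rightMulResiduation_le_iff_mul_le, vPushforward_le_iff]

variable [AddGroup X] [AddGroup Y] (f : X →+ Y)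

theorem vPushforward_add_map_right (ha_shift : ∀ x x' x'' : X, a x' x'' = a (x' + x) (x'' + x))
    (x : X) (w₁ w₂ : Y) :
    vPushforward f a (w₁ + f x) (w₂ + f x) = vPushforward f a w₁ w₂ :=
  calc vPushforward f a (w₁ + f x) (w₂ + f x)
      = ⨆ x₁ : X, ⨆ x₂ : X, ⨆ _ : f (x₁ + x) = w₁ + f x ∧ f (x₂ + x) = w₂ + f x,
          a (x₁ + x) (x₂ + x) :=
        ((Equiv.addRight x).iSup_congr fun _ ↦ ((Equiv.addRight x).iSup_comp).symm).symm
    _ = vPushforward f a w₁ w₂ := by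
      simp only [map_add, add_left_inj, ← ha_shift, vPushforward]

theorem vPushforward_trans [Semigroup V] [IsQuantale V]
    (ha_trans : ∀ x x' x'' : X, a x x' * a x' x'' ≤ a x x'')
    (ha_shift : ∀ x x' x'' : X, a x' x'' = a (x' + x) (x'' + x)) (w₁ w₂ w₃ : Y) :
    vPushforward f a w₁ w₂ * vPushforward f a w₂ w₃ ≤ vPushforward f a w₁ w₃ := by
  rw [vPushforward_mul_vPushforward_le_iff]
  rintro x₁ x₂ rfl rfl x₃ x₄ h_fibre rfl
  have endpoint : f (x₄ + (-x₃ + x₂)) = f x₄ := by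
    rw [map_add, map_add, map_neg, h_fibre, neg_add_cancel, add_zero]
  calc a x₁ x₂ * a x₃ x₄
      = a x₁ x₂ * a x₂ (x₄ + (-x₃ + x₂)) := by
        rw [ha_shift (-x₃ + x₂) x₃ x₄, add_neg_cancel_left]
    _ ≤ a x₁ (x₄ + (-x₃ + x₂)) := ha_trans _ _ _
    _ ≤ vPushforward f a (f x₁) (f (x₄ + (-x₃ + x₂))) := le_vPushforward f a _ _
    _ = vPushforward f a (f x₁) (f x₄) := by rw [endpoint]

end VPushforward

section VGroup

variable {V X Y : Type*} [CompleteLattice V] [AddGroup X] [AddGroup Y]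

/-- `IsVGroup a` says that `a` makes the group `X` a `V`-group: it is reflexive, transitive and
invariant by right shifts. The tensor product of `V` is written multiplicatively, its unit `1`. -/
structure IsVGroup [Monoid V] (a : X → X → V) : Prop where
  refl : ∀ x, 1 ≤ a x x
  trans : ∀ x x' x'', a x x' * a x' x'' ≤ a x x''
  shift : ∀ x x' x'', a x' x'' = a (x' + x) (x'' + x)

theorem IsVGroup.vPushforward [Monoid V] [IsQuantale V] {a : X → X → V} (ha : IsVGroup a)
    {f : X →+ Y} (hf : Function.Surjective f) : IsVGroup (vPushforward f a) where
  refl := hf.forall.mpr fun x ↦ (ha.refl x).trans (le_vPushforward f a x x)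
  trans := vPushforward_trans f ha.trans ha.shift
  shift := hf.forall.mpr fun x w₁ w₂ ↦ (vPushforward_add_map_right f ha.shift x w₁ w₂).symm

theorem stmt_5_general [Monoid V] [IsQuantale V] {a : X → X → V} (ha : IsVGroup a)
    {f : X →+ Y} (hf : Function.Surjective f) :
    IsVGroup (vPushforward f a) ∧ ∀ x x', a x x' ≤ vPushforward f a (f x) (f x') :=
  ⟨ha.vPushforward hf, le_vPushforward f a⟩

end VGroup

theorem isQuantale_of_mul_sSup_distrib {V : Type*} [CompleteLattice V] [CommSemigroup V]
    (h : ∀ (v : V) (s : Set V), v * sSup s = ⨆ u ∈ s, v * u) : IsQuantale V where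
  mul_sSup_distrib := h
  sSup_mul_distrib s v := by simpa only [mul_comm] using h v s

theorem stmt_5 {V : Type*} [CompleteLattice V] [CommMonoid V]
    (hq : ∀ (v : V) (s : Set V), v * sSup s = ⨆ u ∈ s, v * u)
    {X : Type*} [AddGroup X] (a : X → X → V)
    (ha_refl : ∀ x : X, 1 ≤ a x x)
    (ha_trans : ∀ x x' x'' : X, a x x' * a x' x'' ≤ a x x'')
    (ha_shift : ∀ x x' x'' : X, a x' x'' = a (x' + x) (x'' + x))
    (N : AddSubgroup X) [N.Normal]
    (c : X ⧸ N → X ⧸ N → V)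
    (hc : ∀ w₁ w₂ : X ⧸ N, c w₁ w₂ =
      ⨆ x₁ : X, ⨆ x₂ : X,
        ⨆ (_ : (QuotientAddGroup.mk x₁ : X ⧸ N) = w₁ ∧ (QuotientAddGroup.mk x₂ : X ⧸ N) = w₂),
          a x₁ x₂) :
    (∀ w : X ⧸ N, 1 ≤ c w w) ∧
    (∀ w w' w'' : X ⧸ N, c w w' * c w' w'' ≤ c w w'') ∧
    (∀ w w' w'' : X ⧸ N, c w' w'' = c (w' + w) (w'' + w)) ∧
    (∀ x x' : X, a x x' ≤ c (QuotientAddGroup.mk x) (QuotientAddGroup.mk x')) := by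
  have := isQuantale_of_mul_sSup_distrib hq
  obtain rfl : c = vPushforward (QuotientAddGroup.mk' N) a := funext₂ hc
  obtain ⟨hVGroup, hHom⟩ :=
    stmt_5_general ⟨ha_refl, ha_trans, ha_shift⟩ (QuotientAddGroup.mk'_surjective N)
  exact ⟨hVGroup.refl, hVGroup.trans, hVGroup.shift, hHom⟩
end

section
/- Let V be a commutative quantale and (X,a) a V-group. Let N_X = {x ∈ X | k ≤ a(0,x) and k ≤ a(x,0)} and let ā be the final structure on the quotient group X/N_X, given by ā(w₁,w₂) = ⨆{a(x₁,x₂) | [x₁] = w₁ and [x₂] = w₂}. Then (X/N_X, ā) is separated: for every w ∈ X/N_X, if k ≤ ā(w,0) and k ≤ ā(0,w) then w = 0. -/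
/-!
Since `N` collects the elements that are `1`-close to `0` in both directions, shift invariance makes
two elements congruent modulo `N` exactly when they are `1`-close to each other in both directions.
Transitivity then keeps the value of `a` unchanged when its arguments move inside their classes, so
the join defining the final structure at `([x], [y])` is `a x y` itself, and separation of the
quotient is the description of congruence just given.
-/

namespace VGroup

theorem isQuantale_of_mul_sSup {V : Type*} [CompleteLattice V] [CommSemigroup V]
    (h : ∀ (v : V) (s : Set V), v * sSup s = ⨆ u ∈ s, v * u) : IsQuantale V where
  mul_sSup_distrib := h
  sSup_mul_distrib s v := by simpa only [mul_comm] using h v s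

section Transitive

variable {V X : Type*} [Preorder V] [MulOneClass V] [MulLeftMono V] [MulRightMono V]
  {a : X → X → V}

theorem le_of_one_le_of_one_le (ha_trans : ∀ x y z, a x y * a y z ≤ a x z) {x x' y y' : X}
    (hx : 1 ≤ a x' x) (hy : 1 ≤ a y y') : a x y ≤ a x' y' :=
  calc
    a x y ≤ a x' x * a x y := le_mul_of_one_le_left' hx
    _ ≤ a x' y := ha_trans x' x y
    _ ≤ a x' y * a y y' := le_mul_of_one_le_right' hy
    _ ≤ a x' y' := ha_trans x' y y'

end Transitive

section Quotient

variable {V X : Type*} [AddGroup X] {a : X → X → V} {N : AddSubgroup X}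

/-- The values taken by `a` on representatives of the cosets `w₁` and `w₂`. The final structure on
`X ⧸ N` is their join; keeping the set itself allows `V` to lack other joins. -/
def cosetValues (a : X → X → V) (w₁ w₂ : X ⧸ N) : Set V :=
  {v | ∃ x₁ x₂ : X, ((x₁ : X ⧸ N) = w₁ ∧ (x₂ : X ⧸ N) = w₂) ∧ a x₁ x₂ = v}

theorem isLUB_cosetValues [CompleteLattice V] (a : X → X → V) (w₁ w₂ : X ⧸ N) :
    IsLUB (cosetValues a w₁ w₂)
      (⨆ (x₁ : X) (x₂ : X) (_ : (x₁ : X ⧸ N) = w₁ ∧ (x₂ : X ⧸ N) = w₂), a x₁ x₂) := by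
  constructor
  · rintro _ ⟨x₁, x₂, h, rfl⟩
    exact le_iSup_of_le x₁ (le_iSup₂_of_le x₂ h le_rfl)
  · intro v hv
    exact iSup_le fun x₁ => iSup₂_le fun x₂ h => hv ⟨x₁, x₂, h, rfl⟩

theorem mk_eq_mk_iff_one_le [LE V] [One V] [N.Normal]
    (ha_shift : ∀ x y z, a y z = a (y + x) (z + x))
    (hN : ∀ x, x ∈ N ↔ 1 ≤ a 0 x ∧ 1 ≤ a x 0) {x y : X} :
    (x : X ⧸ N) = y ↔ 1 ≤ a x y ∧ 1 ≤ a y x := by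
  have shift_left : a (x - y) 0 = a x y := by simpa using ha_shift y (x - y) 0
  have shift_right : a 0 (x - y) = a y x := by simpa using ha_shift y 0 (x - y)
  rw [QuotientAddGroup.eq_iff_sub_mem, hN, shift_left, shift_right, and_comm]

theorem isGreatest_cosetValues_mk [Preorder V] [MulOneClass V] [MulLeftMono V] [MulRightMono V]
    [N.Normal] (ha_trans : ∀ x y z, a x y * a y z ≤ a x z)
    (ha_shift : ∀ x y z, a y z = a (y + x) (z + x))
    (hN : ∀ x, x ∈ N ↔ 1 ≤ a 0 x ∧ 1 ≤ a x 0) (x y : X) :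
    IsGreatest (cosetValues a (x : X ⧸ N) y) (a x y) := by
  refine ⟨⟨x, y, ⟨rfl, rfl⟩, rfl⟩, ?_⟩
  rintro _ ⟨x₁, y₁, ⟨hx, hy⟩, rfl⟩
  have hx₁ : 1 ≤ a x x₁ := ((mk_eq_mk_iff_one_le ha_shift hN).1 hx).2
  have hy₁ : 1 ≤ a y₁ y := ((mk_eq_mk_iff_one_le ha_shift hN).1 hy).1
  exact le_of_one_le_of_one_le ha_trans hx₁ hy₁

end Quotient

end VGroup

open VGroup

theorem stmt_6_general {V X : Type*} [Preorder V] [MulOneClass V] [MulLeftMono V] [MulRightMono V]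
    [AddGroup X] {a : X → X → V}
    (ha_trans : ∀ x y z, a x y * a y z ≤ a x z)
    (ha_shift : ∀ x y z, a y z = a (y + x) (z + x))
    {N : AddSubgroup X} [N.Normal] (hN : ∀ x, x ∈ N ↔ 1 ≤ a 0 x ∧ 1 ≤ a x 0)
    {abar : X ⧸ N → X ⧸ N → V} (habar : ∀ w₁ w₂, IsLUB (cosetValues a w₁ w₂) (abar w₁ w₂))
    (w₁ w₂ : X ⧸ N) (h₁₂ : 1 ≤ abar w₁ w₂) (h₂₁ : 1 ≤ abar w₂ w₁) : w₁ = w₂ := by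
  have abar_le (x y : X) : abar x y ≤ a x y :=
    (habar x y).2 (isGreatest_cosetValues_mk ha_trans ha_shift hN x y).2
  obtain ⟨x, rfl⟩ := QuotientAddGroup.mk_surjective w₁
  obtain ⟨y, rfl⟩ := QuotientAddGroup.mk_surjective w₂
  exact (mk_eq_mk_iff_one_le ha_shift hN).2 ⟨h₁₂.trans (abar_le x y), h₂₁.trans (abar_le y x)⟩

theorem stmt_6 {V : Type*} [CompleteLattice V] [CommMonoid V]
    (hq : ∀ (v : V) (s : Set V), v * sSup s = ⨆ u ∈ s, v * u)
    {X : Type*} [AddGroup X] (a : X → X → V)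
    (ha_refl : ∀ x : X, 1 ≤ a x x)
    (ha_trans : ∀ x x' x'' : X, a x x' * a x' x'' ≤ a x x'')
    (ha_shift : ∀ x x' x'' : X, a x' x'' = a (x' + x) (x'' + x))
    (N : AddSubgroup X) [N.Normal]
    (hN : (N : Set X) = {x : X | 1 ≤ a 0 x ∧ 1 ≤ a x 0})
    (abar : X ⧸ N → X ⧸ N → V)
    (habar : ∀ w₁ w₂ : X ⧸ N, abar w₁ w₂ =
      ⨆ x₁ : X, ⨆ x₂ : X,
        ⨆ (_ : (QuotientAddGroup.mk x₁ : X ⧸ N) = w₁ ∧ (QuotientAddGroup.mk x₂ : X ⧸ N) = w₂),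
          a x₁ x₂) :
    ∀ w : X ⧸ N, 1 ≤ abar w 0 → 1 ≤ abar 0 w → w = 0 := by
  have : IsQuantale V := isQuantale_of_mul_sSup hq
  exact fun w => stmt_6_general ha_trans ha_shift (Set.ext_iff.1 hN)
    (fun w₁ w₂ => habar w₁ w₂ ▸ isLUB_cosetValues a w₁ w₂) w 0
end

section
/- Let V be an integral commutative quantale (k = ⊤) and (X,a) a V-group. On ℤ × X define b((z,x),(z′,x′)) = a(x,x′) if z < z′, ⊤ if z = z′ and x = x′, and ⊥ otherwise. Then the projection f(z,x) = x is final: for all x₁, x₂ ∈ X, a(x₁,x₂) = ⨆_{z₁,z₂ ∈ ℤ} b((z₁,x₁),(z₂,x₂)). -/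
section StagedHom

variable {ι X V : Type*} [LT ι] [One V]

open Classical in
/-- The `V`-relation on `ι × X` that compares points by `a` when the index strictly increases and is
otherwise discrete. It is the relation `b` on `ℤ × X`, with the unit of `V` as diagonal value; this
is `⊤` when `V` is integral. -/
noncomputable def stagedHom [Bot V] (a : X → X → V) (p q : ι × X) : V :=
  if p.1 < q.1 then a p.2 q.2 else if p = q then 1 else ⊥

lemma stagedHom_of_lt [Bot V] (a : X → X → V) {i j : ι} (h : i < j) (x y : X) :
    stagedHom a (i, x) (j, y) = a x y :=
  if_pos h

lemma stagedHom_le [Preorder V] [OrderBot V] {a : X → X → V} (ha : ∀ x, 1 ≤ a x x)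
    (p q : ι × X) : stagedHom a p q ≤ a p.2 q.2 := by
  unfold stagedHom
  split_ifs with hlt heq
  · exact le_rfl
  · exact heq ▸ ha p.2
  · exact bot_le

theorem stmt_10_general [CompleteLattice V] (hι : ∃ i j : ι, i < j) {a : X → X → V}
    (ha : ∀ x, 1 ≤ a x x) (x₁ x₂ : X) :
    a x₁ x₂ = ⨆ i : ι, ⨆ j : ι, stagedHom a (i, x₁) (j, x₂) := by
  obtain ⟨i, j, hij⟩ := hι
  apply le_antisymm
  · exact le_iSup₂_of_le i j (stagedHom_of_lt a hij x₁ x₂).ge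
  · exact iSup₂_le fun i j => stagedHom_le ha (i, x₁) (j, x₂)

end StagedHom

theorem stmt_10 {V : Type*} [CompleteLattice V] [CommMonoid V]
    (hq : ∀ (v : V) (s : Set V), v * sSup s = ⨆ u ∈ s, v * u)
    (hint : (1 : V) = ⊤)
    {X : Type*} [AddGroup X] (a : X → X → V)
    (ha_refl : ∀ x : X, 1 ≤ a x x)
    (ha_trans : ∀ x x' x'' : X, a x x' * a x' x'' ≤ a x x'')
    (ha_shift : ∀ x x' x'' : X, a x' x'' = a (x' + x) (x'' + x))
    (b : ℤ × X → ℤ × X → V)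
    (hb_lt : ∀ p q : ℤ × X, p.1 < q.1 → b p q = a p.2 q.2)
    (hb_eq : ∀ p q : ℤ × X, p = q → b p q = ⊤)
    (hb_bot : ∀ p q : ℤ × X, ¬ p.1 < q.1 → p ≠ q → b p q = ⊥) :
    ∀ x₁ x₂ : X, a x₁ x₂ = ⨆ z₁ : ℤ, ⨆ z₂ : ℤ, b (z₁, x₁) (z₂, x₂) := by
  have hb : b = stagedHom a := by
    funext p q
    unfold stagedHom
    split_ifs with hlt heq
    exacts [hb_lt p q hlt, (hb_eq p q heq).trans hint.symm, hb_bot p q hlt heq]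
  exact hb ▸ stmt_10_general ⟨0, 1, zero_lt_one⟩ ha_refl
end

section
/- Let V be a commutative quantale, (X,a) a symmetric V-group, (Y,b) a separated V-group, and f : (X,a) → (Y,b) a V-homomorphism. Equip the image subgroup f(X) ≤ Y with the final structure c(y₁,y₂) = ⨆{a(x₁,x₂) | f(x₁) = y₁ and f(x₂) = y₂}. Then c is symmetric (c(y₁,y₂) = c(y₂,y₁) for all y₁,y₂ ∈ f(X)), and for all y₁,y₂ ∈ f(X), if k ≤ c(y₁,y₂) then y₁ = y₂. -/
section FinalStructure

variable {V X Y : Type*} [CompleteLattice V]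

/-- The final structure on `Y` induced by `f : X → Y` from a `V`-valued relation `a` on `X`: the
least `c` with `a x₁ x₂ ≤ c (f x₁) (f x₂)` for all `x₁ x₂`. It is defined on all of `Y`, with value
`⊥` when one of the points lies outside the range of `f`; the structure on the image `f(X)` is its
restriction. -/
def finalStructure (f : X → Y) (a : X → X → V) (y₁ y₂ : Y) : V :=
  ⨆ x₁ : X, ⨆ x₂ : X, ⨆ (_ : f x₁ = y₁ ∧ f x₂ = y₂), a x₁ x₂

theorem finalStructure_le_iff {f : X → Y} {a : X → X → V} {b : Y → Y → V} :
    finalStructure f a ≤ b ↔ ∀ x₁ x₂, a x₁ x₂ ≤ b (f x₁) (f x₂) := by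
  simp only [Pi.le_def, finalStructure, iSup_le_iff]
  constructor
  · intro h x₁ x₂
    exact h _ _ x₁ x₂ ⟨rfl, rfl⟩
  · rintro h _ _ x₁ x₂ ⟨rfl, rfl⟩
    exact h x₁ x₂

theorem le_finalStructure (f : X → Y) (a : X → X → V) (x₁ x₂ : X) :
    a x₁ x₂ ≤ finalStructure f a (f x₁) (f x₂) :=
  finalStructure_le_iff.mp le_rfl x₁ x₂

theorem finalStructure_comm {a : X → X → V} (ha : ∀ x₁ x₂, a x₁ x₂ = a x₂ x₁) (f : X → Y)
    (y₁ y₂ : Y) : finalStructure f a y₁ y₂ = finalStructure f a y₂ y₁ := by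
  have le_flip : finalStructure f a ≤ flip (finalStructure f a) :=
    finalStructure_le_iff.mpr fun x₁ x₂ ↦ (ha x₁ x₂).trans_le (le_finalStructure f a x₂ x₁)
  exact le_antisymm (le_flip y₁ y₂) (le_flip y₂ y₁)

theorem stmt_13_general {k : V} {a : X → X → V} {b : Y → Y → V}
    (hsym : ∀ x x', a x x' = a x' x)
    (hsep : ∀ y y', k ≤ b y y' → k ≤ b y' y → y = y')
    (f : X → Y) (hf : ∀ x x', a x x' ≤ b (f x) (f x')) :
    (∀ y₁ y₂, finalStructure f a y₁ y₂ = finalStructure f a y₂ y₁) ∧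
    (∀ y₁ y₂, k ≤ finalStructure f a y₁ y₂ → y₁ = y₂) := by
  have comm := finalStructure_comm hsym f
  have le_b : finalStructure f a ≤ b := finalStructure_le_iff.mpr hf
  refine ⟨comm, fun y₁ y₂ h ↦ hsep y₁ y₂ (h.trans (le_b y₁ y₂)) ?_⟩
  calc
    k ≤ finalStructure f a y₁ y₂ := h
    _ = finalStructure f a y₂ y₁ := comm y₁ y₂
    _ ≤ b y₂ y₁ := le_b y₂ y₁

end FinalStructure

theorem stmt_13 {V : Type*} [CompleteLattice V] [CommMonoid V]
    (hq : ∀ (v : V) (s : Set V), v * sSup s = ⨆ u ∈ s, v * u)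
    {X Y : Type*} [AddGroup X] [AddGroup Y]
    (a : X → X → V) (b : Y → Y → V)
    (ha_refl : ∀ x : X, 1 ≤ a x x)
    (ha_trans : ∀ x x' x'' : X, a x x' * a x' x'' ≤ a x x'')
    (ha_shift : ∀ x x' x'' : X, a x' x'' = a (x' + x) (x'' + x))
    (hb_refl : ∀ x : Y, 1 ≤ b x x)
    (hb_trans : ∀ x x' x'' : Y, b x x' * b x' x'' ≤ b x x'')
    (hb_shift : ∀ x x' x'' : Y, b x' x'' = b (x' + x) (x'' + x))
    (hsym : ∀ x x' : X, a x x' = a x' x)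
    (hsep : ∀ y y' : Y, 1 ≤ b y y' → 1 ≤ b y' y → y = y')
    (f : X →+ Y) (hf : ∀ x x' : X, a x x' ≤ b (f x) (f x'))
    (c : Y → Y → V)
    (hc : ∀ y₁ y₂ : Y, c y₁ y₂ =
      ⨆ x₁ : X, ⨆ x₂ : X, ⨆ (_ : f x₁ = y₁ ∧ f x₂ = y₂), a x₁ x₂) :
    (∀ y₁ y₂ : Y, y₁ ∈ Set.range f → y₂ ∈ Set.range f → c y₁ y₂ = c y₂ y₁) ∧
    (∀ y₁ y₂ : Y, y₁ ∈ Set.range f → y₂ ∈ Set.range f → 1 ≤ c y₁ y₂ → y₁ = y₂) := by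
  obtain rfl : c = finalStructure f a := funext₂ hc
  obtain ⟨comm, eq_of_le⟩ := stmt_13_general hsym hsep f hf
  exact ⟨fun y₁ y₂ _ _ ↦ comm y₁ y₂, fun y₁ y₂ _ _ ↦ eq_of_le y₁ y₂⟩
end

section
/- Let 𝒞 be a normal category: a finitely complete category with a zero object in which every morphism factors as a normal epimorphism (a cokernel of some morphism) followed by a monomorphism, and in which the pullback of a normal epimorphism along any morphism is a normal epimorphism. Given a commutative diagram of two short exact sequences, with rows (κ : A → B, f : B → C) and (κ′ : A′ → B′, f′ : B′ → C′) and vertical morphisms a : A → A′, b : B → B′, c : C → C′ satisfying κ′ ∘ a = b ∘ κ and f′ ∘ b = c ∘ f, the left-hand square (κ, a, b, κ′) is a pullback if and only if c is a monomorphism. -/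
/-!
Write `f ≫ c = b ≫ f'` for the diagonal of the right-hand square. Since `κ'` is a kernel of `f'`,
the left-hand square is a pullback if and only if `κ` is a kernel of the diagonal. If `c` is a
monomorphism, then the diagonal has the same kernel as `f`, namely `κ`. Conversely, factor the
diagonal as a normal epimorphism `e` followed by a monomorphism `m`. If `κ` is a kernel of the
diagonal, it is also a kernel of `e`, so `e` and `f` are both cokernels of `κ`; hence `c` is `m` up
to an isomorphism of its source.
-/

section

open CategoryTheory CategoryTheory.Limits

variable {𝒞 : Type*} [Category 𝒞] [HasZeroMorphisms 𝒞] {A B Z A' B' Z' : 𝒞}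

theorem isPullback_iff_isKernel_comp {κ : A ⟶ B} {κ' : A' ⟶ B'} {f' : B' ⟶ Z'}
    {a : A ⟶ A'} {b : B ⟶ B'} {d : B ⟶ Z'} {w' : κ' ≫ f' = 0}
    (hκ' : IsLimit (KernelFork.ofι κ' w')) (sq : κ ≫ b = a ≫ κ') (hd : d = b ≫ f') :
    IsPullback κ a b κ' ↔ Nonempty (IsLimit (KernelFork.ofι κ
      (show κ ≫ d = 0 by rw [hd, reassoc_of% sq, w', comp_zero]))) := by
  have : Mono κ' := mono_of_isLimit_fork hκ'
  constructor
  · intro hp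
    have : Mono κ := hp.mono_fst_of_mono
    refine ⟨KernelFork.IsLimit.ofι' _ _ fun {X} x hx ↦ ?_⟩
    obtain ⟨y, hy⟩ := KernelFork.IsLimit.lift' hκ' (x ≫ b) (by rw [Category.assoc, ← hd, hx])
    exact ⟨hp.lift x y hy.symm, hp.lift_fst x y hy.symm⟩
  · rintro ⟨hκ⟩
    have : Mono κ := mono_of_isLimit_fork hκ
    refine ⟨⟨sq⟩, ⟨PullbackCone.isLimitAux' _ fun s ↦ ?_⟩⟩
    obtain ⟨(u : s.pt ⟶ A), (hu : u ≫ κ = s.fst)⟩ := KernelFork.IsLimit.lift' hκ s.fst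
      (by rw [hd, reassoc_of% s.condition, w', comp_zero])
    have hu' : u ≫ a = s.snd := by
      rw [← cancel_mono κ', Category.assoc, ← sq, reassoc_of% hu, s.condition]
    exact ⟨u, hu, hu', fun hm _ ↦ (cancel_mono κ).1 (hm.trans hu.symm)⟩

/-- The universal property of a normal epimorphism `e` as a cokernel of its kernel `κ`: the morphism
of which `e` is given as a cokernel factors through `κ`. -/
def isCokernelOfNormalEpiOfIsKernel {κ : A ⟶ B} (e : B ⟶ Z) [NormalEpi e]
    {w : κ ≫ e = 0} (hκ : IsLimit (KernelFork.ofι κ w)) : IsColimit (CokernelCofork.ofπ e w) :=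
  CokernelCofork.IsColimit.ofπ' e w fun x hx ↦ NormalEpi.desc' e x <| by
    obtain ⟨t, ht : t ≫ κ = _⟩ := KernelFork.IsLimit.lift' hκ _ (NormalEpi.w (f := e))
    rw [← ht, Category.assoc, hx, comp_zero]

theorem mono_of_isCokernel_of_isKernel_comp {κ : A ⟶ B} {f : B ⟶ Z} {c : Z ⟶ Z'}
    {w : κ ≫ f = 0} (hf : IsColimit (CokernelCofork.ofπ f w))
    {wc : κ ≫ f ≫ c = 0} (hκ : IsLimit (KernelFork.ofι κ wc))
    {I : 𝒞} (e : B ⟶ I) (m : I ⟶ Z') [NormalEpi e] [Mono m] (fac : e ≫ m = f ≫ c) :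
    Mono c := by
  have we : κ ≫ e = 0 := by
    rw [← cancel_mono m, Category.assoc, fac, wc, zero_comp]
  have hκe : IsLimit (KernelFork.ofι κ we) := isKernelOfComp m (f ≫ c) hκ we fac
  have he : IsColimit (CokernelCofork.ofπ e we) := isCokernelOfNormalEpiOfIsKernel e hκe
  let i : Z ≅ I := hf.coconePointUniqueUpToIso he
  have hi : f ≫ i.hom = e := hf.comp_coconePointUniqueUpToIso_hom he .one
  have hc : i.hom ≫ m = c := Cofork.IsColimit.hom_ext hf <|
    show f ≫ i.hom ≫ m = f ≫ c by rw [reassoc_of% hi, fac]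
  rw [← hc]
  infer_instance

theorem stmt_18_general {κ : A ⟶ B} {f : B ⟶ Z} {κ' : A' ⟶ B'} {f' : B' ⟶ Z'}
    {a : A ⟶ A'} {b : B ⟶ B'} {c : Z ⟶ Z'}
    (hfact : ∃ (I : 𝒞) (e : B ⟶ I) (m : I ⟶ Z'),
      Nonempty (NormalEpi e) ∧ Mono m ∧ e ≫ m = f ≫ c)
    {w : κ ≫ f = 0} {w' : κ' ≫ f' = 0}
    (hκ : IsLimit (KernelFork.ofι κ w)) (hf : IsColimit (CokernelCofork.ofπ f w))
    (hκ' : IsLimit (KernelFork.ofι κ' w'))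
    (sq1 : κ ≫ b = a ≫ κ') (sq2 : f ≫ c = b ≫ f') :
    IsPullback κ a b κ' ↔ Mono c := by
  rw [isPullback_iff_isKernel_comp hκ' sq1 sq2]
  constructor
  · rintro ⟨hκc⟩
    obtain ⟨I, e, m, ⟨_⟩, _, fac⟩ := hfact
    exact mono_of_isCokernel_of_isKernel_comp hf hκc e m fac
  · intro _
    exact ⟨isKernelCompMono hκ c rfl⟩

end

open CategoryTheory CategoryTheory.Limits in
theorem stmt_18 {𝒞 : Type*} [Category 𝒞] [HasFiniteLimits 𝒞]
    [HasZeroObject 𝒞] [HasZeroMorphisms 𝒞]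
    (hfact : ∀ {A B : 𝒞} (f : A ⟶ B), ∃ (I : 𝒞) (e : A ⟶ I) (m : I ⟶ B),
      Nonempty (NormalEpi e) ∧ Mono m ∧ e ≫ m = f)
    (hstab : ∀ {A B E : 𝒞} (f : A ⟶ B) (p : E ⟶ B),
      Nonempty (NormalEpi p) → Nonempty (NormalEpi (pullback.snd p f)))
    {A B Z A' B' Z' : 𝒞}
    (κ : A ⟶ B) (f : B ⟶ Z) (κ' : A' ⟶ B') (f' : B' ⟶ Z')
    (a : A ⟶ A') (b : B ⟶ B') (c : Z ⟶ Z')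
    (w : κ ≫ f = 0) (w' : κ' ≫ f' = 0)
    (hker : Nonempty (IsLimit (KernelFork.ofι κ w)))
    (hcoker : Nonempty (IsColimit (CokernelCofork.ofπ f w)))
    (hker' : Nonempty (IsLimit (KernelFork.ofι κ' w')))
    (hcoker' : Nonempty (IsColimit (CokernelCofork.ofπ f' w')))
    (sq1 : κ ≫ b = a ≫ κ') (sq2 : f ≫ c = b ≫ f') :
    IsPullback κ a b κ' ↔ Mono c := by
  exact stmt_18_general (hfact (f ≫ c)) hker.some hcoker.some hker'.some sq1 sq2
end
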